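/- For every digraph D and every integer k with dc(D) ≤ k ≤ dG(D), there exists an ordering of the vertices of D such that the greedy coloring with respect to this ordering uses exactly k colors. -/

import Mathlib

/-!
The proof rests on a description of greedy colorings that does not mention orderings. Call a
coloring `c : V → ℕ` with positive colors *Grundy* if its classes are acyclic and no vertex can be
added to a class of smaller color without closing a directed cycle. Greedy colorings are Grundy
(`isGrundy_greedyColoring`), and a Grundy coloring is the greedy coloring along any ordering that
lists the classes by increasing color (`IsGrundy.exists_order`).

Now let `c` be a greedy coloring with `m = dG(D)` colors. For `i ≤ m` let `N i` be the least number
of colors of an acyclic coloring that keeps the first `i` classes of `c` and colors all other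
vertices with colors larger than `i` (`Extends`). Then `N 0 ≤ dc(D)`, `N m ≥ m`, and
`N (i + 1) ≤ N i + 1`, because restoring the class `i + 1` of `c` costs at most one color. Hence
`N i = k` for some `i`. Among the optimal colorings for this `i`, one with the least sum of colors
is Grundy and uses exactly `k` colors.
-/

/-
Common definitions.

A digraph `D : Digraph V` on a finite vertex type `V` is loopless when
`∀ v, ¬ D.Adj v v` (this appears as a hypothesis in the theorems below).
-/

namespace Paper

open Function

variable {V : Type*}

/-- A set `S` of vertices of `D` is acyclic if the arc relation restricted to `S`
admits no vertex with a nonempty directed walk from itself back to itself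
(i.e. the subdigraph induced on `S` has no directed cycle). -/
def AcyclicSet (D : Digraph V) (S : Set V) : Prop :=
  ∀ v : V, ¬ Relation.TransGen (fun a b => a ∈ S ∧ b ∈ S ∧ D.Adj a b) v v

/-- An acyclic coloring: every color class is acyclic. -/
def IsAcyclicColoring (D : Digraph V) {k : ℕ} (c : V → Fin k) : Prop :=
  ∀ i : Fin k, AcyclicSet D {v | c v = i}

/-- A complete coloring: for every ordered pair of distinct colors there is an arc
from a vertex of the first color to a vertex of the second color. -/
def IsCompleteColoring (D : Digraph V) {k : ℕ} (c : V → Fin k) : Prop :=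
  ∀ i j : Fin k, i ≠ j → ∃ u v : V, D.Adj u v ∧ c u = i ∧ c v = j

/-- The dichromatic number `dc(D)`: the least number of colors in an acyclic coloring. -/
noncomputable def dichromatic (D : Digraph V) [Fintype V] : ℕ :=
  sInf {k : ℕ | ∃ c : V → Fin k, IsAcyclicColoring D c}

/-- The diachromatic number `dac(D)`: the largest number of colors in an acyclic
complete coloring (a coloring "with `k` colors" uses all `k` colors, i.e. is surjective). -/
noncomputable def diachromatic (D : Digraph V) [Fintype V] : ℕ :=
  sSup {k : ℕ | ∃ c : V → Fin k,
    Surjective c ∧ IsAcyclicColoring D c ∧ IsCompleteColoring D c}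

/-- The color (a positive integer; `1` is the first color) that the greedy algorithm,
run along the vertex ordering `e` (position `0` first), assigns to the vertex in
position `i`: namely the smallest positive color whose current class stays acyclic
after adding this vertex (a fresh color has an empty class, so for a loopless digraph
this in particular uses a new color exactly when the vertex forms a directed cycle
with every currently used class). -/
noncomputable def greedyColorAt (D : Digraph V) [Fintype V]
    (e : Fin (Fintype.card V) ≃ V) (i : Fin (Fintype.card V)) : ℕ :=
  sInf {c : ℕ | 1 ≤ c ∧
    AcyclicSet D (insert (e i)
      {v : V | ∃ j : Fin (Fintype.card V), ∃ _ : j < i, e j = v ∧ greedyColorAt D e j = c})}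
termination_by i.val
decreasing_by exact ‹_›

/-- The greedy coloring of `D` with respect to the vertex ordering `e`. -/
noncomputable def greedyColoring (D : Digraph V) [Fintype V]
    (e : Fin (Fintype.card V) ≃ V) : V → ℕ :=
  fun v => greedyColorAt D e (e.symm v)

/-- The number of colors used by the greedy coloring with respect to `e`. -/
noncomputable def greedyCount (D : Digraph V) [Fintype V]
    (e : Fin (Fintype.card V) ≃ V) : ℕ :=
  (Finset.univ.image (greedyColoring D e)).card

/-- The digrundy number `dG(D)`: the largest number of colors used by a greedy
coloring, over all orderings of the vertices. -/
noncomputable def digrundy (D : Digraph V) [Fintype V] : ℕ :=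
  sSup {k : ℕ | ∃ e : Fin (Fintype.card V) ≃ V, greedyCount D e = k}

/-- The complement of a digraph: arcs are exactly the ordered pairs of distinct
vertices that are not arcs of `D`. -/
def digraphCompl (D : Digraph V) : Digraph V :=
  ⟨fun u v => u ≠ v ∧ ¬ D.Adj u v⟩

/-- The maximum out-degree `Δ⁺(D)`. -/
noncomputable def maxOutDegree (D : Digraph V) [Fintype V] : ℕ :=
  ⨆ v : V, {u : V | D.Adj v u}.ncard

/-- The maximum in-degree `Δ⁻(D)`. -/
noncomputable def maxInDegree (D : Digraph V) [Fintype V] : ℕ :=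
  ⨆ v : V, {u : V | D.Adj u v}.ncard

/-- The clique number `ω(D)`: the maximum size of a set of vertices every two of
which are joined by arcs in both directions. -/
noncomputable def cliqueNumber (D : Digraph V) [Fintype V] : ℕ :=
  sSup {k : ℕ | ∃ S : Finset V, S.card = k ∧ ∀ u ∈ S, ∀ v ∈ S, u ≠ v → D.Adj u v}

/-- The subdigraph of `D` induced on a set `S` of vertices. -/
def induceD (D : Digraph V) (S : Set V) : Digraph S :=
  ⟨fun u v => D.Adj u v⟩

/-- A parsimonious coloring along the vertex ordering `e`: an acyclic coloring, built
along `e`, in which each vertex must receive an already-used color whenever some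
existing color class remains acyclic upon adding the vertex, and receives the smallest
unused positive integer only if adding it to every existing class creates a directed
cycle. -/
def IsParsimonious (D : Digraph V) [Fintype V]
    (e : Fin (Fintype.card V) ≃ V) (c : V → ℕ) : Prop :=
  (∀ i : ℕ, AcyclicSet D {v | c v = i}) ∧
  ∀ i : Fin (Fintype.card V),
    ((∃ d : ℕ, (∃ j, j < i ∧ c (e j) = d) ∧
        AcyclicSet D (insert (e i) {v : V | ∃ j, j < i ∧ e j = v ∧ c v = d})) →
      ∃ j, j < i ∧ c (e j) = c (e i)) ∧
    ((¬ ∃ d : ℕ, (∃ j, j < i ∧ c (e j) = d) ∧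
        AcyclicSet D (insert (e i) {v : V | ∃ j, j < i ∧ e j = v ∧ c v = d})) →
      c (e i) = sInf {m : ℕ | 1 ≤ m ∧ ∀ j, j < i → c (e j) ≠ m})

/-- The parsimonious `e`-coloring number `dc_e(D)`: the minimum number of colors in a
parsimonious coloring along `e`. -/
noncomputable def parsimoniousNumber (D : Digraph V) [Fintype V]
    (e : Fin (Fintype.card V) ≃ V) : ℕ :=
  sInf {k : ℕ | ∃ c : V → ℕ, IsParsimonious D e c ∧ (Finset.univ.image c).card = k}

/-- The diochromatic number `dc^o(D)`: the maximum of the parsimonious coloring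
numbers over all orderings of the vertices. -/
noncomputable def diochromatic (D : Digraph V) [Fintype V] : ℕ :=
  sSup {k : ℕ | ∃ e : Fin (Fintype.card V) ≃ V, parsimoniousNumber D e = k}

end Paper

namespace Paper

section Helpers

variable {V : Type*}

lemma AcyclicSet.mono {D : Digraph V} {S T : Set V} (h : AcyclicSet D T) (hST : S ⊆ T) :
    AcyclicSet D S := fun v hv =>
  h v (Relation.TransGen.mono (fun _ _ hab => ⟨hST hab.1, hST hab.2.1, hab.2.2⟩) v v hv)

lemma acyclicSet_of_subsingleton {D : Digraph V} (hD : ∀ v, ¬ D.Adj v v) {S : Set V}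
    (hS : S.Subsingleton) : AcyclicSet D S := by
  intro v hv
  obtain ⟨w, hw, -⟩ := (Relation.TransGen.head'_iff).1 hv
  have := hS hw.1 hw.2.1
  subst this
  exact hD _ hw.2.2

/-- A Grundy coloring: positive colors, acyclic classes, and adding a vertex to the class of any
smaller (positive) color creates a directed cycle. -/
structure IsGrundy (D : Digraph V) (c : V → ℕ) : Prop where
  pos : ∀ v, 1 ≤ c v
  acyclic : ∀ j, AcyclicSet D {v | c v = j}
  blocked : ∀ v j, 1 ≤ j → j < c v → ¬ AcyclicSet D (insert v {u | c u = j})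

/-- `c'` is an acyclic coloring with colors at most `k` that keeps the first `i` classes of `c`
and gives every other vertex a color larger than `i`. The bound `i ≤ k` counts the kept classes
among the `k` colors. -/
structure Extends (D : Digraph V) (c : V → ℕ) (i k : ℕ) (c' : V → ℕ) : Prop where
  le : i ≤ k
  acyclic : ∀ j, AcyclicSet D {v | c' v = j}
  keep : ∀ v, c v ≤ i → c' v = c v
  gt : ∀ v, i < c v → i < c' v
  bound : ∀ v, c' v ≤ k

/-- Restoring the class `i + 1` of `c` costs at most one additional color. -/
lemma Extends.succ {D : Digraph V} {c : V → ℕ} (hc : IsGrundy D c) {i k : ℕ} {c' : V → ℕ}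
    (h : Extends D c i k c') :
    Extends D c (i + 1) (k + 1) (fun v => if c v ≤ i + 1 then c v else c' v + 1) := by
  have hik := h.le
  refine ⟨by omega, fun t => ?_, fun v hv => by simp [hv], fun v hv => ?_, fun v => ?_⟩
  · rcases le_or_gt t (i + 1) with ht | ht
    · refine (hc.acyclic t).mono fun v hv => ?_
      simp only [Set.mem_ofPred_eq] at hv ⊢
      split_ifs at hv with h1
      · exact hv
      · have := h.gt v (by omega)
        omega
    · refine (h.acyclic (t - 1)).mono fun v hv => ?_
      simp only [Set.mem_ofPred_eq] at hv ⊢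
      split_ifs at hv with h1 <;> omega
  · have := h.gt v (by omega)
    simp only [if_neg (not_le.2 hv)]
    omega
  · have := h.bound v
    split_ifs <;> omega

variable [Fintype V]

lemma greedyColorAt_mem {D : Digraph V} (hD : ∀ v, ¬ D.Adj v v)
    (e : Fin (Fintype.card V) ≃ V) (i : Fin (Fintype.card V)) :
    1 ≤ greedyColorAt D e i ∧ AcyclicSet D (insert (e i)
      {v : V | ∃ j, ∃ _ : j < i, e j = v ∧ greedyColorAt D e j = greedyColorAt D e i}) := by
  have hne : {c : ℕ | 1 ≤ c ∧ AcyclicSet D (insert (e i)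
      {v : V | ∃ j, ∃ _ : j < i, e j = v ∧ greedyColorAt D e j = c})}.Nonempty := by
    -- a color exceeding the sum of all colors has an empty class
    refine ⟨(∑ j, greedyColorAt D e j) + 1, by omega, acyclicSet_of_subsingleton hD ?_⟩
    have : {v : V | ∃ j, ∃ _ : j < i, e j = v ∧
        greedyColorAt D e j = (∑ j, greedyColorAt D e j) + 1} = ∅ := by
      ext v
      simp only [Set.mem_ofPred_eq, Set.mem_empty_iff_false, iff_false]
      rintro ⟨j, -, -, hj⟩
      have := Finset.single_le_sum (f := greedyColorAt D e) (fun _ _ => Nat.zero_le _)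
        (Finset.mem_univ j)
      omega
    rw [this]
    simp
  have := Nat.sInf_mem hne
  rw [← greedyColorAt] at this
  exact this

lemma isGrundy_greedyColoring {D : Digraph V} (hD : ∀ v, ¬ D.Adj v v)
    (e : Fin (Fintype.card V) ≃ V) : IsGrundy D (greedyColoring D e) := by
  refine ⟨fun v => (greedyColorAt_mem hD e _).1, fun t => ?_, fun v t ht hlt hac => ?_⟩
  · classical
    by_cases hne : (Finset.univ.filter fun i => greedyColorAt D e i = t).Nonempty
    · -- the class is acyclic since it was so when its last vertex was inserted
      obtain ⟨i, hi, hmax⟩ := Finset.exists_max_image _ id hne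
      simp only [Finset.mem_filter, Finset.mem_univ, true_and, id] at hi hmax
      refine (greedyColorAt_mem hD e i).2.mono fun v hv => ?_
      have hv' : greedyColorAt D e (e.symm v) = t := hv
      rcases (hmax _ hv').lt_or_eq with h | h
      · exact Or.inr ⟨e.symm v, h, by simp, by rw [hv', hi]⟩
      · exact Or.inl (by simp [← h])
    · refine acyclicSet_of_subsingleton hD fun v hv => ?_
      exact (hne ⟨e.symm v, by simpa [greedyColoring] using hv⟩).elim
  · have hlt' : t < greedyColorAt D e (e.symm v) := hlt
    rw [greedyColorAt] at hlt'
    refine Nat.notMem_of_lt_sInf hlt' ⟨ht, hac.mono ?_⟩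
    rw [Equiv.apply_symm_apply]
    refine Set.insert_subset_insert ?_
    rintro _ ⟨j, -, rfl, hj⟩
    simpa [greedyColoring] using hj

lemma IsGrundy.exists_order {D : Digraph V} {c : V → ℕ} (hc : IsGrundy D c) :
    ∃ e : Fin (Fintype.card V) ≃ V, greedyColoring D e = c := by
  let e₀ := (Fintype.equivFin V).symm
  let e : Fin (Fintype.card V) ≃ V := (Tuple.sort (c ∘ e₀)).trans e₀
  have hmono : Monotone fun i => c (e i) := Tuple.monotone_sort (c ∘ e₀)
  have key : ∀ i, greedyColorAt D e i = c (e i) := by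
    intro i
    induction i using WellFoundedLT.induction with
    | ind i ih =>
      have hset : ∀ t, {v : V | ∃ j, ∃ _ : j < i, e j = v ∧ greedyColorAt D e j = t}
          = {v : V | ∃ j, j < i ∧ e j = v ∧ c v = t} := by
        intro t
        ext v
        constructor
        · rintro ⟨j, hj, rfl, h⟩
          exact ⟨j, hj, rfl, by rw [← ih j hj, h]⟩
        · rintro ⟨j, hj, rfl, h⟩
          exact ⟨j, hj, rfl, by rw [ih j hj, h]⟩
      rw [greedyColorAt]
      simp only [hset]
      have hmem : c (e i) ∈ {t : ℕ | 1 ≤ t ∧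
          AcyclicSet D (insert (e i) {v : V | ∃ j, j < i ∧ e j = v ∧ c v = t})} := by
        refine ⟨hc.pos _, (hc.acyclic (c (e i))).mono ?_⟩
        rintro v (rfl | ⟨j, -, -, h⟩)
        · rfl
        · exact h
      refine le_antisymm (Nat.sInf_le hmem) (le_csInf ⟨_, hmem⟩ ?_)
      rintro t ⟨ht, hac⟩
      by_contra! hlt
      refine hc.blocked (e i) t ht hlt (hac.mono (Set.insert_subset_insert ?_))
      -- by monotonicity, the whole class `t` precedes position `i`
      intro v hv
      refine ⟨e.symm v, ?_, by simp, hv⟩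
      by_contra! hle
      have := hmono hle
      simp only [Equiv.apply_symm_apply] at this
      have hv' : c v = t := hv
      omega
  refine ⟨e, funext fun v => ?_⟩
  simp [greedyColoring, key]

lemma IsGrundy.exists_color {D : Digraph V} (hD : ∀ v, ¬ D.Adj v v) {c : V → ℕ}
    (hc : IsGrundy D c) {v : V} {j : ℕ} (hj : 1 ≤ j) (hjv : j ≤ c v) : ∃ u, c u = j := by
  rcases hjv.lt_or_eq with h | h
  · by_contra! hno
    refine hc.blocked v j hj h (acyclicSet_of_subsingleton hD ?_)
    have : {u | c u = j} = ∅ := by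
      ext u
      simp [hno u]
    rw [this]
    simp
  · exact ⟨v, h.symm⟩

lemma IsGrundy.card_image {D : Digraph V} (hD : ∀ v, ¬ D.Adj v v) {c : V → ℕ}
    (hc : IsGrundy D c) {k : ℕ} (hle : ∀ v, c v ≤ k) (hk : 1 ≤ k → ∃ v, c v = k) :
    (Finset.univ.image c).card = k := by
  have : Finset.univ.image c = Finset.Icc 1 k := by
    ext j
    simp only [Finset.mem_image, Finset.mem_univ, true_and, Finset.mem_Icc]
    constructor
    · rintro ⟨v, rfl⟩
      exact ⟨hc.pos v, hle v⟩
    · rintro ⟨h1, h2⟩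
      obtain ⟨v, hv⟩ := hk (h1.trans h2)
      exact hc.exists_color hD h1 (hv ▸ h2)
  simp [this]

/-- The colors of a Grundy coloring form an initial segment `1, …, m`. -/
lemma IsGrundy.image_eq {D : Digraph V} (hD : ∀ v, ¬ D.Adj v v) {c : V → ℕ}
    (hc : IsGrundy D c) {m : ℕ} (hm : (Finset.univ.image c).card = m) :
    (∀ v, c v ≤ m) ∧ ∀ j, 1 ≤ j → j ≤ m → ∃ v, c v = j := by
  obtain ⟨M, hle, hM⟩ : ∃ M, (∀ v, c v ≤ M) ∧ (1 ≤ M → ∃ v, c v = M) := by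
    rcases isEmpty_or_nonempty V with h | h
    · exact ⟨0, fun v => h.elim v, by omega⟩
    · obtain ⟨v, hv⟩ := Finite.exists_max c
      exact ⟨c v, hv, fun _ => ⟨v, rfl⟩⟩
  have := hc.card_image hD hle hM
  obtain rfl : M = m := by omega
  refine ⟨hle, fun j h1 h2 => ?_⟩
  obtain ⟨v, hv⟩ := hM (h1.trans h2)
  exact hc.exists_color hD h1 (hv ▸ h2)

/-- A vertex whose color is not needed can be recolored to lower the sum, so for the least `k`
an extension with least color sum is Grundy and uses exactly `k` colors. -/
lemma Extends.exists_isGrundy {D : Digraph V} (hD : ∀ v, ¬ D.Adj v v) {c : V → ℕ}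
    (hc : IsGrundy D c) {i k : ℕ} (hi : 1 ≤ i → ∃ v, c v = i)
    (hex : ∃ c', Extends D c i k c') (hmin : ∀ l, l < k → ¬ ∃ c', Extends D c i l c') :
    ∃ c', IsGrundy D c' ∧ (Finset.univ.image c').card = k := by
  classical
  obtain ⟨c', hc', hsum⟩ : ∃ c', Extends D c i k c' ∧
      ∀ c'', Extends D c i k c'' → ∑ v, c' v ≤ ∑ v, c'' v := by
    have hne : {s | ∃ c', Extends D c i k c' ∧ ∑ v, c' v = s}.Nonempty := by
      obtain ⟨c', h⟩ := hex
      exact ⟨_, c', h, rfl⟩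
    obtain ⟨c', h, hs⟩ := Nat.sInf_mem hne
    exact ⟨c', h, fun c'' h'' => hs ▸ Nat.sInf_le ⟨c'', h'', rfl⟩⟩
  have hlow : ∀ j, j ≤ i → {u | c' u = j} = {u | c u = j} := by
    intro j hj
    ext u
    simp only [Set.mem_ofPred_eq]
    rcases le_or_gt (c u) i with h | h
    · rw [hc'.keep u h]
    · have := hc'.gt u h
      omega
  have hg : IsGrundy D c' := by
    refine ⟨fun v => ?_, hc'.acyclic, fun v j hj hjv hac => ?_⟩
    · rcases le_or_gt (c v) i with h | h
      · rw [hc'.keep v h]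
        exact hc.pos v
      · have := hc'.gt v h
        omega
    · rcases le_or_gt j i with hji | hji
      · rw [hlow j hji] at hac
        refine hc.blocked v j hj ?_ hac
        rcases le_or_gt (c v) i with h | h
        · rwa [← hc'.keep v h]
        · omega
      · have hvi : i < c v := by
          by_contra! h
          have := hc'.keep v h
          omega
        have hext : Extends D c i k (Function.update c' v j) := by
          refine ⟨hc'.le, fun t => ?_, fun u hu => ?_, fun u hu => ?_, fun u => ?_⟩
          · by_cases ht : t = j
            · subst ht
              refine hac.mono fun u hu => ?_
              by_cases huv : u = v
              · exact Or.inl huv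
              · exact Or.inr (by simpa [huv] using hu)
            · refine (hc'.acyclic t).mono fun u hu => ?_
              by_cases huv : u = v
              · subst huv
                exact (ht (by simpa using hu.symm)).elim
              · simpa [huv] using hu
          · have huv : u ≠ v := by
              rintro rfl
              omega
            simpa [huv] using hc'.keep u hu
          · by_cases huv : u = v
            · subst huv
              simpa using hji
            · simpa [huv] using hc'.gt u hu
          · by_cases huv : u = v
            · subst huv
              simpa using hjv.le.trans (hc'.bound u)
            · simpa [huv] using hc'.bound u
        refine absurd (hsum _ hext) (not_le.2 ?_)
        refine Finset.sum_lt_sum (fun u _ => ?_) ⟨v, Finset.mem_univ v, by simpa using hjv⟩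
        by_cases huv : u = v
        · subst huv
          simpa using hjv.le
        · simp [huv]
  refine ⟨c', hg, hg.card_image hD hc'.bound fun hk => ?_⟩
  rcases hc'.le.lt_or_eq with hik | rfl
  · by_contra! hno
    refine hmin (k - 1) (by omega) ⟨c', by omega, hc'.acyclic, hc'.keep, hc'.gt, fun v => ?_⟩
    have := hc'.bound v
    have := hno v
    omega
  · obtain ⟨v, hv⟩ := hi hk
    exact ⟨v, by rw [hc'.keep v hv.le, hv]⟩

end Helpers

/-- For every digraph `D` and every integer `k` with
`dc(D) ≤ k ≤ dG(D)`, there exists an ordering of the vertices of `D` such that the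
greedy coloring with respect to this ordering uses exactly `k` colors. -/
theorem greedy_interpolation {V : Type*} [Fintype V]
    (D : Digraph V) (hD : ∀ v : V, ¬ D.Adj v v)
    (k : ℕ) (h1 : dichromatic D ≤ k) (h2 : k ≤ digrundy D) :
    ∃ e : Fin (Fintype.card V) ≃ V, greedyCount D e = k := by
  classical
  suffices h : ∃ c', IsGrundy D c' ∧ (Finset.univ.image c').card = k by
    obtain ⟨c', hg, hk⟩ := h
    obtain ⟨e, rfl⟩ := hg.exists_order
    exact ⟨e, hk⟩
  obtain ⟨e, he⟩ : digrundy D ∈ {k : ℕ | ∃ e : Fin (Fintype.card V) ≃ V, greedyCount D e = k} := by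
    refine Nat.sSup_mem ⟨_, (Fintype.equivFin V).symm, rfl⟩ ⟨Fintype.card V, ?_⟩
    rintro _ ⟨e, rfl⟩
    exact Finset.card_image_le
  obtain ⟨a, ha⟩ : dichromatic D ∈ {k : ℕ | ∃ c : V → Fin k, IsAcyclicColoring D c} := by
    refine Nat.sInf_mem ⟨Fintype.card V, Fintype.equivFin V, fun i => ?_⟩
    refine acyclicSet_of_subsingleton hD fun u hu v hv => ?_
    exact (Fintype.equivFin V).injective (Eq.trans hu (Eq.symm hv))
  set m := digrundy D
  set c := greedyColoring D e
  have hc : IsGrundy D c := isGrundy_greedyColoring hD e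
  obtain ⟨hle, hsurj⟩ := hc.image_eq hD he
  have h0 : Extends D c 0 (dichromatic D) (fun v => (a v : ℕ) + 1) := by
    refine ⟨Nat.zero_le _, fun t => ?_, fun v hv => ?_, fun v _ => Nat.succ_pos _,
      fun v => (a v).isLt⟩
    · by_cases ht : ∃ v, (a v : ℕ) + 1 = t
      · obtain ⟨v, rfl⟩ := ht
        refine (ha (a v)).mono fun u hu => ?_
        simp only [Set.mem_ofPred_eq] at hu ⊢
        exact Fin.ext (by omega)
      · refine acyclicSet_of_subsingleton hD fun u hu => ?_
        exact (ht ⟨u, hu⟩).elim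
    · have := hc.pos v
      omega
  have hex : ∀ i, ∃ l, ∃ c', Extends D c i l c' := by
    intro i
    induction i with
    | zero => exact ⟨_, _, h0⟩
    | succ i ih =>
      obtain ⟨l, c', h⟩ := ih
      exact ⟨_, _, h.succ hc⟩
  -- `N i` is `Nat.find (hex i)`; the first `i` with `k ≤ N i` satisfies `N i = k`
  have hP : ∃ i, k ≤ Nat.find (hex i) := by
    obtain ⟨c', h⟩ := Nat.find_spec (hex m)
    exact ⟨m, h2.trans h.le⟩
  have hPle : Nat.find hP ≤ m := by
    obtain ⟨c', h⟩ := Nat.find_spec (hex m)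
    exact Nat.find_min' hP (h2.trans h.le)
  obtain ⟨i, hi⟩ : ∃ i, i = Nat.find hP := ⟨_, rfl⟩
  have hki : k ≤ Nat.find (hex i) := hi ▸ Nat.find_spec hP
  have hik : Nat.find (hex i) ≤ k := by
    cases i with
    | zero => exact (Nat.find_min' (hex 0) ⟨_, h0⟩).trans h1
    | succ i =>
      have hlt := Nat.find_min hP (m := i) (by omega)
      obtain ⟨c', h⟩ := Nat.find_spec (hex i)
      have := Nat.find_min' (hex (i + 1)) ⟨_, h.succ hc⟩
      omega
  have hN : Nat.find (hex i) = k := le_antisymm hik hki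
  refine Extends.exists_isGrundy hD hc (i := i) (fun h => hsurj i h (by omega)) ?_ ?_
  · exact hN ▸ Nat.find_spec (hex i)
  · exact fun l hl => Nat.find_min (hex i) (by omega)

end Paper
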